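/- For every integer t with 1 ≤ t ≤ 14 there exists a linear code over the field with 31 elements of length 56, dimension 3t, minimum distance at least 56 − 4t, and locality 3. In particular (t = 12), there exists a linear code over the field with 31 elements of length 56, dimension 36, minimum distance at least 8, and locality 3. -/

import Mathlib

/-!
The curve `y ^ 2 = x ^ 8 + 16 x ^ 6 + 14 x ^ 4 + 16 x ^ 2 + 1` covers the line of the invariant
function `s` with fibres of size four, on which `x` takes distinct values. The code evaluates the
functions `g₀(s) + g₁(s) x + g₂(s) x ^ 2` with `deg gⱼ < t` on 14 rational fibres. Restricted to a
fibre such a function is a polynomial of degree at most `2` in `x`, so three values determine the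
fourth by interpolation.

In the plane of `(s, x)` the curve has bidegree `(2, 4)` and the function has bidegree at most
`(t - 1, 2)`. As the curve is irreducible, the two share no component, and Bézout's bound on
`ℙ¹ × ℙ¹` leaves at most `2 * 2 + 4 * (t - 1) = 4 * t` common zeros. The bound comes from the
resultant with respect to `x`: the powers of the `x`-coordinates of the common zeros over `s = a`
are independent left kernel vectors of the Sylvester matrix at `a`, so the resultant vanishes at
`a` to at least the order of their number.
-/

namespace LocallyRecoverable

open Finset Polynomial
open scoped Polynomial.Bivariate

section Determinant

variable {n : Type*} [Fintype n] [DecidableEq n]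

theorem prod_dvd_det_of_forall_dvd {R : Type*} [CommRing R] {A : Matrix n n R} {d : n → R}
    (h : ∀ i j, d i ∣ A i j) : ∏ i, d i ∣ A.det := by
  choose B hB using h
  have hA : A = .of fun i j ↦ d i * Matrix.of B i j := Matrix.ext hB
  rw [hA, Matrix.det_mul_column]
  exact dvd_mul_right _ _

theorem natDegree_det_le_sum {R : Type*} [CommRing R] {A : Matrix n n R[X]} {d : n → ℕ}
    (h : ∀ i j, (A i j).natDegree ≤ d j) : A.det.natDegree ≤ ∑ j, d j := by
  rw [Matrix.det_apply]
  refine natDegree_sum_le_of_forall_le _ _ fun σ _ ↦ (natDegree_smul_le _ _).trans ?_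
  exact (natDegree_prod_le _ _).trans (sum_le_sum fun j _ ↦ h _ _)

theorem exists_isUnit_det_row_eq {K ι : Type*} [Field K] {v : ι → n → K}
    (hv : LinearIndependent K v) :
    ∃ (U : Matrix n n K) (e : ι ↪ n), IsUnit U.det ∧ ∀ i, U (e i) = v i := by
  let b := Module.Basis.sumExtend hv
  let e := b.indexEquiv (Pi.basisFun K n)
  refine ⟨.of (b.reindex e), Function.Embedding.inl.trans e.toEmbedding, ?_, fun i ↦ ?_⟩
  · rw [← Matrix.isUnit_iff_isUnit_det, ← Matrix.linearIndependent_rows_iff_isUnit]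
    exact (b.reindex e).linearIndependent
  · ext j
    simp only [Matrix.of_apply, Function.Embedding.trans_apply, Equiv.coe_toEmbedding,
      Module.Basis.reindex_apply, e.symm_apply_apply, b, Module.Basis.sumExtend,
      Module.Basis.extend_apply_self]
    rfl

theorem X_sub_C_pow_card_dvd_det {K ι : Type*} [Field K] [Fintype ι] {A : Matrix n n K[X]} {a : K}
    {v : ι → n → K} (hv : LinearIndependent K v)
    (h : ∀ i, Matrix.vecMul (v i) (A.map (eval a)) = 0) : (X - C a) ^ Fintype.card ι ∣ A.det := by
  -- Row operations turn the kernel vectors `v i` into rows that vanish identically at `a`.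
  obtain ⟨U, e, hU, he⟩ := exists_isUnit_det_row_eq hv
  have hUC : IsUnit (C U.det) := hU.map C
  have hdet : (U.map C * A).det = C U.det * A.det := by
    rw [Matrix.det_mul, RingHom.map_det]; rfl
  rw [← hUC.dvd_mul_left, ← hdet]
  have hrow (k j : n) : (if k ∈ univ.map e then X - C a else 1) ∣ (U.map C * A) k j := by
    split_ifs with hk
    · obtain ⟨i, -, rfl⟩ := mem_map.1 hk
      rw [dvd_iff_isRoot, IsRoot.def]
      simpa [Matrix.mul_apply, eval_finsetSum, Matrix.vecMul, dotProduct, he] using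
        congr_fun (h i) j
    · exact one_dvd _
  simpa only [prod_ite_mem, univ_inter, prod_const, card_map, card_univ] using
    prod_dvd_det_of_forall_dvd hrow

end Determinant

section Resultant

theorem pow_vecMul_sylvester_eq_zero {R : Type*} [CommRing R] {f g : R[X]} {m n : ℕ}
    (hf : f.natDegree ≤ m) (hg : g.natDegree ≤ n) {y : R} (hfy : f.eval y = 0)
    (hgy : g.eval y = 0) :
    Matrix.vecMul (fun i : Fin (m + n) ↦ y ^ (i : ℕ)) (sylvester f g m n) = 0 := by
  ext j
  let b := ((degreeLT.basis R m).prod (degreeLT.basis R n)).reindex finSumFinEquiv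
  let p := sylvesterMap f g hf hg (b j)
  calc ∑ i : Fin (m + n), y ^ (i : ℕ) * sylvester f g m n i j
      = ∑ i : Fin (m + n), (p : R[X]).coeff i * y ^ (i : ℕ) := by
        refine sum_congr rfl fun i _ ↦ ?_
        rw [← toMatrix_sylvesterMap' f g hf hg, LinearMap.toMatrix_apply, degreeLT.basis_repr,
          mul_comm]
    _ = (p : R[X]).eval y := (eval_eq_sum_degreeLTEquiv p.2 y).symm
    _ = 0 := by simp [p, hfy, hgy]

theorem linearIndependent_pow_of_card_le {K : Type*} [Field K] {T : Finset K} {N : ℕ}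
    (hT : #T ≤ N) : LinearIndependent K fun (y : T) (i : Fin N) ↦ (y : K) ^ (i : ℕ) := by
  have hrows : LinearIndependent K (Matrix.vandermonde fun k ↦ (T.equivFin.symm k : K)).row := by
    rw [Matrix.linearIndependent_rows_iff_isUnit, Matrix.isUnit_iff_isUnit_det, isUnit_iff_ne_zero,
      Matrix.det_vandermonde_ne_zero_iff]
    exact Subtype.val_injective.comp T.equivFin.symm.injective
  have := (linearIndependent_equiv T.equivFin).2 hrows
  refine LinearIndependent.of_comp (LinearMap.funLeft K K (Fin.castLE hT)) ?_
  convert this using 1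
  ext y i
  change (y : K) ^ (i : ℕ) = (T.equivFin.symm (T.equivFin y) : K) ^ (i : ℕ)
  rw [Equiv.symm_apply_apply]

theorem natDegree_resultant_le {R : Type*} [CommRing R] {f g : R[X][Y]} {m n d e : ℕ}
    (hf : ∀ i, (f.coeff i).natDegree ≤ d) (hg : ∀ i, (g.coeff i).natDegree ≤ e) :
    (resultant f g m n).natDegree ≤ m * e + n * d := by
  refine (natDegree_det_le_sum (d := Fin.addCases (fun _ ↦ e) fun _ ↦ d) fun i j ↦ ?_).trans ?_
  · refine j.addCases (fun j ↦ ?_) fun j ↦ ?_ <;>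
      simp only [sylvester, Matrix.of_apply, Fin.addCases_left, Fin.addCases_right] <;>
      split_ifs <;> simp [hf, hg]
  · simp [Fin.sum_univ_add]

theorem exists_sylvesterMap_eq_zero {R : Type*} [CommRing R] [IsDomain R] {f g : R[X]}
    (h : resultant f g = 0) : ∃ pq ≠ 0, sylvesterMap f g le_rfl le_rfl pq = 0 := by
  let b := ((degreeLT.basis R f.natDegree).prod (degreeLT.basis R g.natDegree)).reindex
    finSumFinEquiv
  obtain ⟨v, hv, hSv⟩ := Matrix.exists_mulVec_eq_zero_iff.2 h
  refine ⟨b.equivFun.symm v, b.equivFun.symm.map_ne_zero_iff.2 hv,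
    (degreeLT.basis R _).equivFun.injective ?_⟩
  rw [← toMatrix_sylvesterMap' f g le_rfl le_rfl, ← b.equivFun.apply_symm_apply v] at hSv
  rw [map_zero, ← hSv]
  exact (LinearMap.toMatrix_mulVec_repr b (degreeLT.basis R _) (sylvesterMap f g le_rfl le_rfl)
    (b.equivFun.symm v)).symm

theorem eq_zero_of_dvd_of_mem_degreeLT {R : Type*} [CommRing R] [IsDomain R] {f p : R[X]}
    (h : f ∣ p) (hp : p ∈ degreeLT R f.natDegree) : p = 0 := by
  by_contra h0
  exact (natDegree_le_of_dvd h h0).not_gt ((natDegree_lt_iff_degree_lt h0).2 (mem_degreeLT.1 hp))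

theorem resultant_ne_zero_of_isRelPrime {R : Type*} [CommRing R] [IsDomain R]
    [UniqueFactorizationMonoid R] {f g : R[X]} (h : IsRelPrime f g) : resultant f g ≠ 0 := by
  intro h0
  obtain ⟨⟨p, q⟩, hpq, hsylv⟩ := exists_sylvesterMap_eq_zero h0
  have hsum : f * q + g * p = (0 : R[X]) := congrArg Subtype.val hsylv
  have hfp : f ∣ p := h.dvd_of_dvd_mul_left ⟨-q, by linear_combination hsum⟩
  have hgq : g ∣ q := h.symm.dvd_of_dvd_mul_left ⟨-p, by linear_combination hsum⟩
  exact hpq (Prod.ext (Subtype.ext (eq_zero_of_dvd_of_mem_degreeLT hfp p.2))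
    (Subtype.ext (eq_zero_of_dvd_of_mem_degreeLT hgq q.2)))

theorem card_le_natDegree_of_evalEval_eq_zero {R : Type*} [CommRing R] [IsDomain R]
    {f : R[X][Y]} {a : R} {T : Finset R} (hf : f.map (evalRingHom a) ≠ 0)
    (h : ∀ y ∈ T, f.evalEval a y = 0) : #T ≤ f.natDegree := by
  have hT : T.val ⊆ (f.map (evalRingHom a)).roots := fun y hy ↦ by
    simpa [mem_roots hf, map_evalRingHom_eval] using h y hy
  exact (card_le_degree_of_subset_roots hT).trans natDegree_map_le

theorem C_X_sub_C_dvd_iff {R : Type*} [CommRing R] {f : R[X][Y]} {a : R} :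
    C (X - C a) ∣ f ↔ f.map (evalRingHom a) = 0 := by
  rw [C_dvd_iff_dvd_coeff]
  simp [dvd_iff_isRoot, Polynomial.ext_iff]

theorem card_fibre_le_of_isRelPrime {R : Type*} [CommRing R] [IsDomain R] {f g : R[X][Y]}
    (hfg : IsRelPrime f g) {a : R} {T : Finset R}
    (h : ∀ y ∈ T, f.evalEval a y = 0 ∧ g.evalEval a y = 0) :
    #T ≤ f.natDegree + g.natDegree := by
  by_cases hf : f.map (evalRingHom a) = 0
  · have hg : g.map (evalRingHom a) ≠ 0 := fun hg ↦
      not_isUnit_X_sub_C a (isUnit_C.1 (hfg (C_X_sub_C_dvd_iff.2 hf) (C_X_sub_C_dvd_iff.2 hg)))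
    exact (card_le_natDegree_of_evalEval_eq_zero hg fun y hy ↦ (h y hy).2).trans
      (Nat.le_add_left ..)
  · exact (card_le_natDegree_of_evalEval_eq_zero hf fun y hy ↦ (h y hy).1).trans
      (Nat.le_add_right ..)

theorem coeff_coeff_swap {R : Type*} [CommSemiring R] (f : R[X][Y]) (i j : ℕ) :
    ((Bivariate.swap f).coeff i).coeff j = (f.coeff j).coeff i := by
  induction f using Polynomial.induction_on' with
  | add p q hp hq => simp [hp, hq]
  | monomial n p =>
    induction p using Polynomial.induction_on' with
    | add p q hp hq => simp_all [map_add]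
    | monomial m r =>
      rw [Bivariate.swap_monomial_monomial]
      simp only [coeff_monomial]
      split_ifs <;> simp_all [coeff_monomial]

theorem natDegree_swap_le_iff {R : Type*} [CommSemiring R] {f : R[X][Y]} {d : ℕ} :
    (Bivariate.swap f).natDegree ≤ d ↔ ∀ i, (f.coeff i).natDegree ≤ d := by
  simp only [natDegree_le_iff_coeff_eq_zero, Polynomial.ext_iff, coeff_coeff_swap, coeff_zero]
  exact ⟨fun h i N hN ↦ h N hN i, fun h N hN i ↦ h i N hN⟩

theorem card_image_snd_of_injOn {K L ι : Type*} [DecidableEq L] {P : ι → K × L} {s : Finset ι}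
    (hP : Set.InjOn P s) {a : K} (hs : ∀ i ∈ s, (P i).1 = a) :
    #(s.image fun i ↦ (P i).2) = #s :=
  card_image_of_injOn fun i hi j hj h ↦
    hP hi hj (Prod.ext ((hs i hi).trans (hs j hj).symm) h)

variable {K : Type*} [Field K]

theorem X_sub_C_pow_card_dvd_resultant {f g : K[X][Y]} {a : K} {T : Finset K}
    (hT : #T ≤ f.natDegree + g.natDegree)
    (h : ∀ y ∈ T, f.evalEval a y = 0 ∧ g.evalEval a y = 0) :
    (X - C a) ^ #T ∣ resultant f g := by
  rw [← Fintype.card_coe]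
  refine X_sub_C_pow_card_dvd_det (linearIndependent_pow_of_card_le hT) fun y ↦ ?_
  have hmap : (sylvester f g f.natDegree g.natDegree).map (eval a) =
      sylvester (f.map (evalRingHom a)) (g.map (evalRingHom a)) f.natDegree g.natDegree :=
    (sylvester_map_map f g _ _ (evalRingHom a)).symm
  rw [hmap]
  apply pow_vecMul_sylvester_eq_zero natDegree_map_le natDegree_map_le
  · rw [map_evalRingHom_eval]; exact (h y y.2).1
  · rw [map_evalRingHom_eval]; exact (h y y.2).2

theorem card_commonZeros_le {f g : K[X][Y]} (hfg : IsRelPrime f g) {Z : Finset (K × K)}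
    (hZ : ∀ p ∈ Z, f.evalEval p.1 p.2 = 0 ∧ g.evalEval p.1 p.2 = 0) :
    #Z ≤ f.natDegree * (Bivariate.swap g).natDegree +
      g.natDegree * (Bivariate.swap f).natDegree := by
  classical
  let T (a : K) : Finset K := {p ∈ Z | p.1 = a}.image Prod.snd
  have hT (a : K) : ∀ y ∈ T a, f.evalEval a y = 0 ∧ g.evalEval a y = 0 := by
    simp only [T, mem_image, mem_filter]
    rintro _ ⟨p, ⟨hp, rfl⟩, rfl⟩
    exact hZ p hp
  have hcard (a : K) : #(T a) = #{p ∈ Z | p.1 = a} :=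
    card_image_snd_of_injOn Function.injective_id.injOn fun _ hp ↦ (mem_filter.1 hp).2
  have hdvd : ∏ a ∈ Z.image Prod.fst, (X - C a) ^ #(T a) ∣ resultant f g :=
    prod_dvd_of_coprime
      (fun a _ b _ hab ↦ (pairwise_coprime_X_sub_C Function.injective_id hab).pow)
      fun a _ ↦ X_sub_C_pow_card_dvd_resultant (card_fibre_le_of_isRelPrime hfg (hT a)) (hT a)
  calc #Z = ∑ a ∈ Z.image Prod.fst, #(T a) := by
        simp only [hcard, card_eq_sum_card_image Prod.fst Z]
    _ = (∏ a ∈ Z.image Prod.fst, (X - C a) ^ #(T a)).natDegree := by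
        rw [natDegree_prod _ _ fun a _ ↦ pow_ne_zero _ (X_sub_C_ne_zero a)]
        simp
    _ ≤ (resultant f g).natDegree :=
        natDegree_le_of_dvd hdvd (resultant_ne_zero_of_isRelPrime hfg)
    _ ≤ _ :=
        natDegree_resultant_le (natDegree_swap_le_iff.1 le_rfl) (natDegree_swap_le_iff.1 le_rfl)

end Resultant

section Code

/-- A linear code `C` has locality `r` if each coordinate of a codeword is determined by at most
`r` other coordinates, whose positions do not depend on the codeword. -/
def HasLocality {R ι : Type*} [Semiring R] (C : Submodule R (ι → R)) (r : ℕ) : Prop :=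
  ∀ i, ∃ I : Finset ι, i ∉ I ∧ #I ≤ r ∧ ∀ x ∈ C, ∀ y ∈ C, (∀ j ∈ I, x j = y j) → x i = y i

/-- The message polynomial `∑ j, g j * Y ^ j` of a family of `r` polynomials `g j` of degree less
than `t`, as a linear map. -/
noncomputable def messagePoly (R : Type*) [CommSemiring R] (r t : ℕ) :
    (Fin r → degreeLT R t) →ₗ[R] R[X][Y] :=
  ∑ j : Fin r, (monomial (j : ℕ)).restrictScalars R ∘ₗ (degreeLT R t).subtype ∘ₗ LinearMap.proj j

/-- The evaluation code at the points `P i`: its codewords are the evaluations of the message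
polynomials with `r` coefficients of degree less than `t`. The first coordinate plays the role of
the function on the quotient curve, the second that of the function separating its fibres. -/
noncomputable def evaluationCode {R ι : Type*} [CommSemiring R] (P : ι → R × R) (r t : ℕ) :
    Submodule R (ι → R) :=
  (LinearMap.pi fun i ↦ (aevalAeval (P i).1 (P i).2).toLinearMap ∘ₗ messagePoly R r t).range

theorem coeff_messagePoly {R : Type*} [CommSemiring R] {r t : ℕ} (g : Fin r → degreeLT R t)
    (k : ℕ) : (messagePoly R r t g).coeff k = if h : k < r then (g ⟨k, h⟩ : R[X]) else 0 := by
  simp only [messagePoly, LinearMap.sum_apply, LinearMap.comp_apply, LinearMap.proj_apply,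
    Submodule.subtype_apply, LinearMap.restrictScalars_apply, finsetSum_coeff, coeff_monomial]
  split_ifs with h
  · rw [sum_eq_single ⟨k, h⟩] <;> simp +contextual [Fin.ext_iff]
  · exact sum_eq_zero fun j _ ↦ if_neg (by lia)

theorem degree_messagePoly_lt {R : Type*} [CommSemiring R] {r t : ℕ} (g : Fin r → degreeLT R t) :
    (messagePoly R r t g).degree < r :=
  (degree_lt_iff_coeff_zero _ _).2 fun k hk ↦ by rw [coeff_messagePoly, dif_neg hk.not_gt]

theorem degree_coeff_messagePoly_lt {R : Type*} [CommSemiring R] {r t : ℕ}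
    (g : Fin r → degreeLT R t) (k : ℕ) : ((messagePoly R r t g).coeff k).degree < t := by
  rw [coeff_messagePoly]
  split_ifs
  · exact mem_degreeLT.1 (g _).2
  · simp

theorem messagePoly_injective {R : Type*} [CommSemiring R] {r t : ℕ} :
    Function.Injective (messagePoly R r t) := fun g h hgh ↦ by
  ext1 j
  have hj := congr_arg (coeff · j) hgh
  simp only [coeff_messagePoly, dif_pos j.2] at hj
  exact Subtype.ext hj

theorem mem_evaluationCode {R ι : Type*} [CommSemiring R] {P : ι → R × R} {r t : ℕ} {x : ι → R} :
    x ∈ evaluationCode P r t ↔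
      ∃ g, (fun i ↦ (messagePoly R r t g).evalEval (P i).1 (P i).2) = x := by
  simp only [evaluationCode, LinearMap.mem_range, funext_iff, LinearMap.pi_apply,
    LinearMap.comp_apply, AlgHom.toLinearMap_apply, coe_aevalAeval_eq_evalEval]

variable {R ι : Type*} [CommRing R] [IsDomain R] {P : ι → R × R} {r t : ℕ}

theorem map_evalRingHom_eq_zero_of_degree_lt_card {f : R[X][Y]} {a : R} {I : Finset ι}
    (hP : Set.InjOn P I) (hI : ∀ i ∈ I, (P i).1 = a) (hf : f.degree < #I)
    (h : ∀ i ∈ I, f.evalEval (P i).1 (P i).2 = 0) : f.map (evalRingHom a) = 0 := by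
  classical
  by_contra hne
  have hf0 : f ≠ 0 := fun h0 ↦ hne (by rw [h0, Polynomial.map_zero])
  have hle : #(I.image fun i ↦ (P i).2) ≤ f.natDegree := by
    refine card_le_natDegree_of_evalEval_eq_zero hne fun y hy ↦ ?_
    obtain ⟨i, hi, rfl⟩ := mem_image.1 hy
    exact hI i hi ▸ h i hi
  rw [card_image_snd_of_injOn hP hI] at hle
  exact hle.not_gt ((natDegree_lt_iff_degree_lt hf0).2 hf)

variable [Fintype ι] [DecidableEq R]

theorem eq_zero_of_forall_evalEval_eq_zero (hP : P.Injective)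
    (hfibre : ∀ i, r ≤ #{j | (P j).1 = (P i).1}) (hbase : t ≤ #(univ.image fun i ↦ (P i).1))
    {f : R[X][Y]} (hf : f.degree < r) (hcoeff : ∀ k, (f.coeff k).degree < t)
    (h : ∀ i, f.evalEval (P i).1 (P i).2 = 0) : f = 0 := by
  have hmap (i : ι) : f.map (evalRingHom (P i).1) = 0 :=
    map_evalRingHom_eq_zero_of_degree_lt_card (I := {j | (P j).1 = (P i).1}) hP.injOn
      (by simp) (hf.trans_le (mod_cast hfibre i)) fun j _ ↦ h j
  ext1 k
  refine eq_zero_of_degree_lt_of_eval_finset_eq_zero _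
    ((hcoeff k).trans_le (mod_cast hbase)) fun a ha ↦ ?_
  obtain ⟨i, -, rfl⟩ := mem_image.1 ha
  simpa using congr_arg (coeff · k) (hmap i)

theorem finrank_evaluationCode (hP : P.Injective) (hfibre : ∀ i, r ≤ #{j | (P j).1 = (P i).1})
    (hbase : t ≤ #(univ.image fun i ↦ (P i).1)) :
    Module.finrank R (evaluationCode P r t) = r * t := by
  rw [evaluationCode, LinearMap.finrank_range_of_inj, Module.finrank_pi_fintype]
  · simp [Module.finrank_eq_card_basis (degreeLT.basis R t)]
  · refine (injective_iff_map_eq_zero _).2 fun g hg ↦ messagePoly_injective ?_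
    rw [map_zero]
    exact eq_zero_of_forall_evalEval_eq_zero hP hfibre hbase (degree_messagePoly_lt g)
      (degree_coeff_messagePoly_lt g) fun i ↦ by
        simpa [coe_aevalAeval_eq_evalEval] using congr_fun hg i

theorem hasLocality_evaluationCode (hP : P.Injective)
    (hfibre : ∀ i, r < #{j | (P j).1 = (P i).1}) : HasLocality (evaluationCode P r t) r := by
  classical
  intro i
  have hi : i ∈ ({j | (P j).1 = (P i).1} : Finset ι) := by simp
  obtain ⟨I, hI, hIr⟩ := exists_subset_card_eq
    (s := ({j | (P j).1 = (P i).1} : Finset ι).erase i) (n := r)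
    (by rw [card_erase_of_mem hi]; exact Nat.le_sub_one_of_lt (hfibre i))
  refine ⟨I, fun h ↦ notMem_erase _ _ (hI h), hIr.le, fun x hx y hy hxy ↦ ?_⟩
  obtain ⟨g, hg⟩ := mem_evaluationCode.1 (sub_mem hx hy)
  have hzero : (messagePoly R r t g).map (evalRingHom (P i).1) = 0 :=
    map_evalRingHom_eq_zero_of_degree_lt_card hP.injOn
      (fun j hj ↦ by simpa using mem_of_mem_erase (hI hj)) (hIr ▸ degree_messagePoly_lt g)
      fun j hj ↦ (congr_fun hg j).trans (sub_eq_zero.2 (hxy j hj))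
  refine sub_eq_zero.1 ((congr_fun hg i).symm.trans ?_)
  rw [← map_evalRingHom_eval, hzero, eval_zero]

theorem card_le_hammingNorm_add {K : Type*} [Field K] [DecidableEq K] {P : ι → K × K}
    (hP : P.Injective) {G : K[X][Y]} (hG : Irreducible G) (hGr : r ≤ G.natDegree)
    (hGP : ∀ i, G.evalEval (P i).1 (P i).2 = 0) {x : ι → K} (hx : x ∈ evaluationCode P r t)
    (hx0 : x ≠ 0) :
    Fintype.card ι ≤
      hammingNorm x + ((r - 1) * (Bivariate.swap G).natDegree + G.natDegree * (t - 1)) := by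
  obtain ⟨g, rfl⟩ := mem_evaluationCode.1 hx
  set f := messagePoly K r t g
  have hf0 : f ≠ 0 := fun h ↦ hx0 (by simp [h, Pi.zero_def])
  have hfr : f.natDegree < r := (natDegree_lt_iff_degree_lt hf0).2 (degree_messagePoly_lt g)
  have hft : (Bivariate.swap f).natDegree ≤ t - 1 := natDegree_swap_le_iff.2 fun k ↦
    natDegree_le_iff_coeff_eq_zero.2 fun N hN ↦ coeff_eq_zero_of_degree_lt
      ((degree_coeff_messagePoly_lt g k).trans_le (mod_cast Nat.le_of_pred_lt hN))
  have hrel : IsRelPrime f G := ((hG.isRelPrime_iff_not_dvd).2 fun hdvd ↦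
    (natDegree_le_of_dvd hdvd hf0).not_gt (hfr.trans_le hGr)).symm
  let Z : Finset ι := {i | f.evalEval (P i).1 (P i).2 = 0}
  have hZ : #Z ≤ (r - 1) * (Bivariate.swap G).natDegree + G.natDegree * (t - 1) := by
    rw [← card_map ⟨P, hP⟩]
    refine (card_commonZeros_le hrel fun p hp ↦ ?_).trans ?_
    · obtain ⟨i, hi, rfl⟩ := mem_map.1 hp
      exact ⟨(mem_filter.1 hi).2, hGP i⟩
    · gcongr
      lia
  rw [hammingNorm, ← card_univ, ← card_filter_add_card_filter_not
    fun i ↦ f.evalEval (P i).1 (P i).2 = 0, add_comm]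
  gcongr

end Code

section Quadratic

theorem coeff_quadratic {R : Type*} [Semiring R] (a b c : R) :
    (C a * X ^ 2 + C b * X + C c).coeff 2 = a ∧ (C a * X ^ 2 + C b * X + C c).coeff 1 = b ∧
      (C a * X ^ 2 + C b * X + C c).coeff 0 = c := by
  simp [coeff_C, coeff_X]

theorem isPrimitive_quadratic_of_isCoprime {R : Type*} [CommRing R] {a c : R} (b : R)
    (h : IsCoprime a c) : (C a * X ^ 2 + C b * X + C c).IsPrimitive := fun d hd ↦ by
  obtain ⟨h2, -, h0⟩ := coeff_quadratic a b c
  have hdvd := (C_dvd_iff_dvd_coeff _ _).1 hd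
  exact h.isUnit_of_dvd' (h2 ▸ hdvd 2) (h0 ▸ hdvd 0)

theorem irreducible_quadratic_of_not_isSquare_discrim {R : Type*} [CommRing R] [IsDomain R]
    {a b c : R} (hprim : (C a * X ^ 2 + C b * X + C c).IsPrimitive)
    (hdisc : ¬IsSquare (discrim a b c)) : Irreducible (C a * X ^ 2 + C b * X + C c) := by
  have ha : a ≠ 0 := by
    rintro rfl
    exact hdisc ⟨b, by rw [discrim]; ring⟩
  set f := C a * X ^ 2 + C b * X + C c with hf
  have hdeg : f.natDegree = 2 := natDegree_quadratic ha
  have hconst {p q : R[X]} (hpq : f = p * q) (hp : p.natDegree = 0) : IsUnit p := by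
    rw [eq_C_of_natDegree_eq_zero hp] at hpq ⊢
    exact (hprim _ ⟨q, hpq⟩).map C
  refine ⟨not_isUnit_of_natDegree_pos f (by lia), fun p q hpq ↦ ?_⟩
  by_contra! hpq'
  have hp : p.natDegree ≠ 0 := fun hp ↦ hpq'.1 (hconst hpq hp)
  have hq : q.natDegree ≠ 0 := fun hq ↦ hpq'.2 (hconst (hpq.trans (mul_comm p q)) hq)
  have hsum : p.natDegree + q.natDegree = 2 := by
    rw [← hdeg, hpq, natDegree_mul] <;> rintro rfl <;> simp at hp hq
  obtain ⟨α, β, rfl⟩ := exists_eq_X_add_C_of_natDegree_le_one (by lia : p.natDegree ≤ 1)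
  obtain ⟨γ, δ, rfl⟩ := exists_eq_X_add_C_of_natDegree_le_one (by lia : q.natDegree ≤ 1)
  have hcoeff : C a * X ^ 2 + C b * X + C c =
      C (α * γ) * X ^ 2 + C (α * δ + β * γ) * X + C (β * δ) := by
    rw [← hf, hpq]; simp only [C_mul, C_add]; ring
  obtain ⟨h2, h1, h0⟩ := coeff_quadratic a b c
  obtain ⟨h2', h1', h0'⟩ := coeff_quadratic (α * γ) (α * δ + β * γ) (β * δ)
  rw [hcoeff] at h2 h1 h0
  exact hdisc ⟨α * δ - β * γ, by rw [discrim, ← h2, ← h1, ← h0, h2', h1', h0']; ring⟩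

end Quadratic

section Curve

/-- The plane model, in the coordinates `(s, x)`, of the hyperelliptic curve
`y ^ 2 = x ^ 8 + 16 x ^ 6 + 14 x ^ 4 + 16 x ^ 2 + 1`, where `s = (y - (x ^ 2 + 1) ^ 2) / x ^ 2`
generates the field of functions invariant under the Klein four-group of `(x, y) ↦ (-x, y)` and
`(x, y) ↦ (1 / x, y / x ^ 4)`. The inner polynomial variable is `s`, the outer one is `x`. -/
noncomputable def curve : (ZMod 31)[X][Y] :=
  C (2 * X - 12) * Y ^ 4 + C (X ^ 2 + 4 * X - 8) * Y ^ 2 + C (2 * X - 12)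

theorem swap_curve : Bivariate.swap curve =
    C (X ^ 2) * Y ^ 2 + C (2 * (X ^ 2 + 1) ^ 2) * Y + C (-4 * (3 * X ^ 4 + 2 * X ^ 2 + 3)) := by
  simp only [curve, map_add, map_sub, map_mul, map_pow, map_neg, map_one, map_ofNat,
    Bivariate.swap_X, Bivariate.swap_Y]
  ring

theorem natDegree_curve : curve.natDegree = 4 := by
  have h : (2 * X - 12 : (ZMod 31)[X]) ≠ 0 := fun h ↦ absurd (congr_arg (eval 0) h) <| by
    simp only [eval_sub, eval_mul, eval_X, eval_ofNat, eval_zero]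
    decide
  unfold curve
  compute_degree!

theorem natDegree_swap_curve_le : (Bivariate.swap curve).natDegree ≤ 2 :=
  swap_curve ▸ natDegree_quadratic_le

local instance : Fact (Nat.Prime 31) := ⟨by norm_num⟩

theorem isCoprime_swap_curve :
    IsCoprime (X ^ 2 : (ZMod 31)[X]) (-4 * (3 * X ^ 4 + 2 * X ^ 2 + 3)) :=
  -- `18` is the inverse modulo `31` of the constant coefficient `-12`.
  ⟨216 * X ^ 2 + 144, 18, by
    linear_combination (-7 : (ZMod 31)[X]) * CharP.cast_eq_zero (ZMod 31)[X] 31⟩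

theorem discrim_swap_curve : discrim (X ^ 2 : (ZMod 31)[X]) (2 * (X ^ 2 + 1) ^ 2)
    (-4 * (3 * X ^ 4 + 2 * X ^ 2 + 3)) =
      2 ^ 2 * (X ^ 8 + 16 * X ^ 6 + 14 * X ^ 4 + 16 * X ^ 2 + 1) := by
  rw [discrim]; ring

theorem not_isSquare_discrim_swap_curve : ¬IsSquare (discrim (X ^ 2 : (ZMod 31)[X])
    (2 * (X ^ 2 + 1) ^ 2) (-4 * (3 * X ^ 4 + 2 * X ^ 2 + 3))) := by
  rw [discrim_swap_curve]
  refine fun hsq ↦ absurd (hsq.map (evalRingHom 1)) ?_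
  simp only [coe_evalRingHom, eval_add, eval_mul, eval_pow, eval_X, eval_ofNat, eval_one]
  decide

theorem irreducible_curve : Irreducible curve := by
  rw [← MulEquiv.irreducible_iff (Bivariate.swap (R := ZMod 31)), swap_curve]
  exact irreducible_quadratic_of_not_isSquare_discrim
    (isPrimitive_quadratic_of_isCoprime _ isCoprime_swap_curve) not_isSquare_discrim_swap_curve

/-- The fibres of the coordinate `s` on `curve` consisting of four affine points over `ZMod 31`,
each recorded as its value of `s` and the coordinate `x` of one of its points. -/
def rationalFibre : Fin 14 → ZMod 31 × ZMod 31 :=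
  ![(2, 3), (4, 7), (5, 12), (7, 2), (9, 4), (10, 5), (11, 7), (13, 4), (15, 11), (16, 12),
    (19, 5), (24, 3), (27, 2), (29, 11)]

/-- The 56 evaluation points `(s, x)`, four consecutive indices for each fibre: the Klein
four-group acts on the coordinate `x` by sign and inversion. -/
def point (i : Fin 56) : ZMod 31 × ZMod 31 :=
  let (k, l) := (finProdFinEquiv (m := 14) (n := 4)).symm i
  let (s, u) := rationalFibre k
  (s, ![u, -u, u⁻¹, -u⁻¹] l)

theorem point_injective : point.Injective := by
  decide +kernel

theorem card_fibre_point (i : Fin 56) : #{j | (point j).1 = (point i).1} = 4 := by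
  revert i
  decide +kernel

theorem card_image_fst_point : #(univ.image fun i ↦ (point i).1) = 14 := by
  decide +kernel

theorem evalEval_curve_point (i : Fin 56) : curve.evalEval (point i).1 (point i).2 = 0 := by
  simp only [curve, evalEval_add, evalEval_mul, evalEval_pow, evalEval_C, evalEval_X, eval_sub,
    eval_add, eval_mul, eval_pow, eval_X, eval_ofNat]
  revert i
  decide +kernel

end Curve

end LocallyRecoverable

open LocallyRecoverable

theorem exists_LRC_F31_length56 :
    ∀ t : ℕ, 1 ≤ t → t ≤ 14 →
      ∃ C : Submodule (ZMod 31) (Fin 56 → ZMod 31),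
        Module.finrank (ZMod 31) C = 3 * t ∧
        (∀ x : Fin 56 → ZMod 31, x ∈ C → x ≠ 0 →
          56 - 4 * t ≤ Nat.card {i : Fin 56 // x i ≠ 0}) ∧
        (∀ i : Fin 56, ∃ I : Finset (Fin 56), i ∉ I ∧ I.card ≤ 3 ∧
          ∀ x ∈ C, ∀ y ∈ C, (∀ j ∈ I, x j = y j) → x i = y i) := by
  intro t ht1 ht14
  have : Fact (Nat.Prime 31) := ⟨by norm_num⟩
  have hfibre (i : Fin 56) := (card_fibre_point i).ge
  refine ⟨evaluationCode point 3 t, ?_, fun x hx hx0 ↦ ?_, ?_⟩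
  · exact finrank_evaluationCode point_injective (fun i ↦ Nat.le_of_succ_le (hfibre i))
      (ht14.trans card_image_fst_point.ge)
  · have hdist := card_le_hammingNorm_add point_injective irreducible_curve
      (by rw [natDegree_curve]; lia) evalEval_curve_point hx hx0
    have hdeg := natDegree_swap_curve_le
    rw [natDegree_curve, Fintype.card_fin] at hdist
    rw [Nat.card_eq_fintype_card, Fintype.card_subtype, ← hammingNorm]
    lia
  · exact hasLocality_evaluationCode point_injective hfibre
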